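/- Let n ≥ 4 be an integer with {log₂ n} ≥ {log₂ 3}. If r is a positive integer such that {log₂ n} < (⌊r/2⌋ + 1)/r, then D_±(C_n^r) = ⌊r log₂ n⌋ + 1, where C_n^r denotes the direct sum of r copies of the cyclic group C_n. -/

import Mathlib

open Finset

/-- A sequence `g` over `G` has an `A`-weighted zero-subsum: there is a nonempty
index set `I` and weights `a i ∈ A` for `i ∈ I` with `∑ i ∈ I, a i • g i = 0`. -/
def HasWZS (A : Set ℤ) {G : Type*} [AddCommGroup G] {ℓ : ℕ} (g : Fin ℓ → G) : Prop :=
  ∃ (I : Finset (Fin ℓ)) (a : Fin ℓ → ℤ), I.Nonempty ∧ (∀ i ∈ I, a i ∈ A) ∧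
    ∑ i ∈ I, a i • g i = 0

/-- The `A`-weighted Davenport constant of `G`: the smallest `ℓ` such that every
sequence of length `ℓ` over `G` has an `A`-weighted zero-subsum. -/
noncomputable def DavW (A : Set ℤ) (G : Type*) [AddCommGroup G] : ℕ :=
  sInf {ℓ : ℕ | ∀ g : Fin ℓ → G, HasWZS A g}

/-- The plus-minus weighted Davenport constant. -/
noncomputable def Davpm (G : Type*) [AddCommGroup G] : ℕ :=
  DavW ({1, -1} : Set ℤ) G

/-!
The signs `±1` turn two different index sets with equal sums into a weighted zero-subsum, so a
sequence without one has distinct subset sums and `D_±(G) ≤ ⌊log₂ |G|⌋ + 1`.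

Conversely let `d = ⌊log₂ n⌋`. The powers `1, 2, …, 2 ^ (d - 1)` have no plus-minus weighted
zero-subsum in `C_n`. The condition `{log₂ 3} ≤ {log₂ n}` says that `3 * 2 ^ (d - 1) ≤ n`, which
leaves room in `C_n ⊕ C_n` for a sequence of length `2 * d + 1`. Grouping the `r` summands into
pairs gives length `r * d + ⌊r / 2⌋` in `C_n^r`, and `{log₂ n} < (⌊r / 2⌋ + 1) / r` makes this equal
to `⌊r log₂ n⌋`.
-/

/-- The family version of `AddDissociated`: no nontrivial combination of the `g i` with
coefficients in `{-1, 0, 1}` vanishes. For a sequence `g : Fin ℓ → G` this says that `g` has no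
plus-minus weighted zero-subsum; arbitrary index types make it easy to glue sequences together. -/
def IsDissociated {ι G : Type*} [Fintype ι] [AddCommGroup G] (g : ι → G) : Prop :=
  ∀ ε : ι → ℤ, (∀ i, |ε i| ≤ 1) → ∑ i, ε i • g i = 0 → ε = 0

section IsDissociated

variable {ι κ G H : Type*} [Fintype ι] [Fintype κ] [AddCommGroup G] [AddCommGroup H]

lemma isDissociated_iff_not_hasWZS {ℓ : ℕ} {g : Fin ℓ → G} :
    IsDissociated g ↔ ¬ HasWZS ({1, -1} : Set ℤ) g := by
  constructor
  · rintro hg ⟨I, a, ⟨i, hi⟩, ha, hsum⟩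
    have ha_one (j) (hj : j ∈ I) : |a j| = 1 := by rcases ha j hj with h | h <;> simp_all
    have hzero : (fun j ↦ if j ∈ I then a j else 0) = 0 := by
      refine hg _ (fun j ↦ ?_) (by simpa [ite_smul, sum_ite_mem] using hsum)
      split_ifs with hj
      exacts [(ha_one j hj).le, by simp]
    have hai : a i = 0 := by simpa [hi] using congrFun hzero i
    simpa [hai] using ha_one i hi
  · intro hg ε hε hsum
    by_contra hne
    obtain ⟨i, hi⟩ := Function.ne_iff.1 hne
    refine hg ⟨univ.filter (ε · ≠ 0), ε, ⟨i, by simpa using hi⟩, fun j hj ↦ ?_, ?_⟩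
    · have hj_ne : ε j ≠ 0 := by simpa using hj
      have hj_le := abs_le.1 (hε j)
      simp only [Set.mem_insert_iff, Set.mem_singleton_iff]
      omega
    · rw [← hsum]
      exact sum_filter_of_ne fun j _ hj hzero ↦ hj (by simp [hzero])

namespace IsDissociated

lemma comp_injective {g : ι → G} (hg : IsDissociated g) {e : κ → ι} (he : e.Injective) :
    IsDissociated (g ∘ e) := by
  intro ε hε hsum
  have hext : Function.extend e ε 0 = 0 := by
    refine hg _ (fun i ↦ ?_) ?_
    · by_cases hi : ∃ j, e j = i
      · obtain ⟨j, rfl⟩ := hi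
        simpa [he.extend_apply] using hε j
      · simp [Function.extend_apply' _ _ _ hi]
    · rw [← hsum]
      refine (Fintype.sum_of_injective e he _ _ (fun i hi ↦ ?_) fun j ↦ ?_).symm
      · simp [Function.extend_apply' _ _ _ hi]
      · simp [he.extend_apply]
  funext j
  simpa [he.extend_apply] using congrFun hext (e j)

lemma map_injective {g : ι → G} (hg : IsDissociated g) {f : G →+ H} (hf : Function.Injective f) :
    IsDissociated (f ∘ g) :=
  fun ε hε hsum ↦ hg ε hε <| hf <| by simpa using hsum

lemma sumElim_inl_inr {g : ι → G} {h : κ → H} (hg : IsDissociated g) (hh : IsDissociated h) :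
    IsDissociated (Sum.elim (AddMonoidHom.inl G H ∘ g) (AddMonoidHom.inr G H ∘ h)) := by
  intro ε hε hsum
  have hfst : ∑ i, ε (.inl i) • g i = 0 := by
    simpa [Prod.fst_sum] using congrArg Prod.fst hsum
  have hsnd : ∑ j, ε (.inr j) • h j = 0 := by
    simpa [Prod.snd_sum] using congrArg Prod.snd hsum
  funext i
  rcases i with i | j
  · exact congrFun (hg _ (fun i ↦ hε (.inl i)) hfst) i
  · exact congrFun (hh _ (fun j ↦ hε (.inr j)) hsnd) j

lemma injective_sum {g : ι → G} (hg : IsDissociated g) :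
    Function.Injective fun s : Finset ι ↦ ∑ i ∈ s, g i := by
  classical
  intro s t hst
  have hdiff : (fun i ↦ (if i ∈ s then 1 else 0) - (if i ∈ t then 1 else 0) : ι → ℤ) = 0 := by
    refine hg _ (fun i ↦ ?_) ?_
    · split_ifs <;> simp
    · simpa [sub_smul, ite_smul, sum_ite_mem, sub_eq_zero] using hst
  ext i
  have hi := congrFun hdiff i
  by_cases his : i ∈ s <;> by_cases hit : i ∈ t <;> simp_all

lemma two_pow_card_le [Finite G] {g : ι → G} (hg : IsDissociated g) :
    2 ^ Fintype.card ι ≤ Nat.card G := by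
  simpa using Nat.card_le_card_of_injective _ hg.injective_sum

lemma intCast_zmod {g : ι → ℤ} (hg : IsDissociated g) {n : ℕ} (hn : ∑ i, |g i| < n) :
    IsDissociated fun i ↦ (g i : ZMod n) := by
  intro ε hε hsum
  have hdvd : (n : ℤ) ∣ ∑ i, ε i • g i := by
    rw [← ZMod.intCast_zmod_eq_zero_iff_dvd]
    simpa using hsum
  refine hg ε hε (Int.eq_zero_of_abs_lt_dvd hdvd (lt_of_le_of_lt ?_ hn))
  calc |∑ i, ε i • g i| ≤ ∑ i, |ε i • g i| := abs_sum_le_sum_abs _ _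
    _ ≤ ∑ i, |g i| := sum_le_sum fun i _ ↦ by
      rw [smul_eq_mul, abs_mul]
      exact mul_le_of_le_one_left (abs_nonneg _) (hε i)

end IsDissociated

end IsDissociated

section Davpm

variable {ι G H : Type*} [Fintype ι] [AddCommGroup G] [AddCommGroup H]

lemma exists_isDissociated_of_lt_davpm {ℓ : ℕ} (hℓ : ℓ < Davpm G) :
    ∃ g : Fin ℓ → G, IsDissociated g := by
  simpa only [Set.mem_ofPred_eq, not_forall, ← isDissociated_iff_not_hasWZS] using
    Nat.notMem_of_lt_sInf hℓ

lemma davpm_le_log_card_add_one [Finite G] : Davpm G ≤ Nat.log 2 (Nat.card G) + 1 := by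
  by_contra! hlt
  obtain ⟨g, hg⟩ := exists_isDissociated_of_lt_davpm hlt
  refine (Nat.lt_pow_succ_log_self one_lt_two (Nat.card G)).not_ge ?_
  simpa using hg.two_pow_card_le

lemma IsDissociated.card_lt_davpm [Finite G] {g : ι → G} (hg : IsDissociated g) :
    Fintype.card ι < Davpm G := by
  -- The infimum in `DavW` is `0` on the empty set, so some `ℓ` has to be exhibited first.
  have hne : {ℓ : ℕ | ∀ f : Fin ℓ → G, HasWZS ({1, -1} : Set ℤ) f}.Nonempty := by
    refine ⟨Nat.card G, fun f ↦ ?_⟩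
    by_contra hf
    have hcard := (isDissociated_iff_not_hasWZS.2 hf).two_pow_card_le
    rw [Fintype.card_fin] at hcard
    exact hcard.not_gt Nat.lt_two_pow_self
  by_contra! hle
  let e : Fin (Davpm G) → ι := (Fintype.equivFin ι).symm ∘ Fin.castLE hle
  have he : e.Injective := (Fintype.equivFin ι).symm.injective.comp (Fin.castLE_injective hle)
  exact isDissociated_iff_not_hasWZS.1 (hg.comp_injective he) (Nat.sInf_mem hne _)

lemma davpm_pos [Finite G] : 0 < Davpm G :=
  IsDissociated.card_lt_davpm (ι := Empty) (g := Empty.elim) fun _ _ _ ↦ Subsingleton.elim _ _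

lemma davpm_le_of_injective [Finite H] (f : G →+ H) (hf : Function.Injective f) :
    Davpm G ≤ Davpm H := by
  refine le_of_forall_lt fun ℓ hℓ ↦ ?_
  obtain ⟨g, hg⟩ := exists_isDissociated_of_lt_davpm hℓ
  simpa using (hg.map_injective hf).card_lt_davpm

lemma add_lt_davpm_prod [Finite G] [Finite H] {a b : ℕ} (ha : a < Davpm G) (hb : b < Davpm H) :
    a + b < Davpm (G × H) := by
  obtain ⟨g, hg⟩ := exists_isDissociated_of_lt_davpm ha
  obtain ⟨h, hh⟩ := exists_isDissociated_of_lt_davpm hb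
  simpa using (hg.sumElim_inl_inr hh).card_lt_davpm

lemma mul_add_half_lt_davpm_pi [Finite G] {a : ℕ} (ha : a < Davpm G)
    (ha₂ : 2 * a + 1 < Davpm (G × G)) (r : ℕ) : r * a + r / 2 < Davpm (Fin r → G) := by
  induction r using Nat.twoStepInduction with
  | zero => simpa using davpm_pos
  | one =>
    let e : G ≃+ (Fin 1 → G) := (LinearEquiv.funUnique (Fin 1) ℤ G).symm.toAddEquiv
    simpa using ha.trans_le (davpm_le_of_injective e.toAddMonoidHom e.injective)
  | more r ih _ =>
    let cons (s : ℕ) : G × (Fin s → G) ≃+ (Fin (s + 1) → G) :=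
      (Fin.consLinearEquiv ℤ fun _ ↦ G).toAddEquiv
    let e : (G × G) × (Fin r → G) ≃+ (Fin (r + 2) → G) :=
      AddEquiv.prodAssoc.trans (((AddEquiv.refl G).prodCongr (cons r)).trans (cons (r + 1)))
    calc (r + 2) * a + (r + 2) / 2 = 2 * a + 1 + (r * a + r / 2) := by
          rw [Nat.add_div_right r two_pos]; ring
      _ < Davpm ((G × G) × (Fin r → G)) := add_lt_davpm_prod ha₂ ih
      _ ≤ Davpm (Fin (r + 2) → G) := davpm_le_of_injective e.toAddMonoidHom e.injective

end Davpm

section PowersOfTwo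

variable {k : ℕ}

lemma sum_mul_two_pow_succ (ε : Fin (k + 1) → ℤ) :
    ∑ i, ε i * 2 ^ (i : ℕ) = ε 0 + 2 * ∑ i : Fin k, ε i.succ * 2 ^ (i : ℕ) := by
  rw [Fin.sum_univ_succ, mul_sum]
  simp [pow_succ', mul_left_comm]

lemma isDissociated_two_pow : IsDissociated fun i : Fin k ↦ (2 : ℤ) ^ (i : ℕ) := by
  induction k with
  | zero => exact fun _ _ _ ↦ Subsingleton.elim _ _
  | succ k ih =>
    intro ε hε hsum
    simp only [smul_eq_mul, sum_mul_two_pow_succ] at hsum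
    have hε_zero := abs_le.1 (hε 0)
    have hzero : ε 0 = 0 := by omega
    have hsucc : (fun i : Fin k ↦ ε i.succ) = 0 :=
      ih _ (fun i ↦ hε i.succ) (by simp only [smul_eq_mul]; omega)
    funext i
    exact Fin.cases hzero (congrFun hsucc) i

lemma sum_abs_two_pow_lt : ∑ i : Fin k, |(2 : ℤ) ^ (i : ℕ)| < 2 ^ k := by
  simp only [abs_pow, Nat.abs_ofNat]
  rw [Fin.sum_univ_eq_sum_range (fun i ↦ (2 : ℤ) ^ i)]
  have := mul_geom_sum (2 : ℤ) k
  linarith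

lemma abs_sum_mul_two_pow_lt {ε : Fin k → ℤ} (hε : ∀ i, |ε i| ≤ 1) :
    |∑ i, ε i * 2 ^ (i : ℕ)| < 2 ^ k :=
  calc |∑ i, ε i * 2 ^ (i : ℕ)| ≤ ∑ i, |ε i * 2 ^ (i : ℕ)| := abs_sum_le_sum_abs _ _
    _ ≤ ∑ i : Fin k, |(2 : ℤ) ^ (i : ℕ)| := sum_le_sum fun i _ ↦ by
      rw [abs_mul]
      exact mul_le_of_le_one_left (abs_nonneg _) (hε i)
    _ < 2 ^ k := sum_abs_two_pow_lt

lemma lt_davpm_zmod {n : ℕ} (hn : 2 ^ k ≤ n) : k < Davpm (ZMod n) := by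
  have : NeZero n := ⟨(Nat.two_pow_pos k |>.trans_le hn).ne'⟩
  have hsum : ∑ i : Fin k, |(2 : ℤ) ^ (i : ℕ)| < n :=
    sum_abs_two_pow_lt.trans_le (by exact_mod_cast hn)
  simpa using (isDissociated_two_pow.intCast_zmod hsum).card_lt_davpm

end PowersOfTwo

section PairFamily

lemma eq_zero_or_odd_of_dvd_three_mul_add {n M V s : ℤ} (hM : Even M) (hMn : 3 * M ≤ n)
    (hV : |V| < M) (hs : |s| ≤ 3) (hdvd : n ∣ 3 * V + s) :
    (V = 0 ∧ s = 0) ∨ (|s| = 3 ∧ Odd V) := by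
  rw [abs_lt] at hV
  rw [abs_le] at hs
  obtain ⟨m, rfl⟩ := hM
  obtain ⟨q, hq⟩ := hdvd
  have hq_le : q ≤ 1 := by nlinarith
  have hq_ge : -1 ≤ q := by nlinarith
  rw [abs_eq (by norm_num), Int.odd_iff]
  interval_cases q <;> omega

lemma eq_zero_and_eq_zero_of_dvd_add_mul {n M L t : ℤ} (hMn : 3 * M ≤ n) (hL : |L| < M)
    (ht : |t| ≤ 2) (hdvd : n ∣ L + M * t) : L = 0 ∧ t = 0 := by
  have hM : 0 < M := (abs_nonneg L).trans_lt hL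
  have hlt : |L + M * t| < n :=
    calc |L + M * t| ≤ |L| + M * |t| := by
          simpa only [abs_mul, abs_of_pos hM] using abs_add_le L (M * t)
      _ < n := by nlinarith
  have hzero : L + M * t = 0 := Int.eq_zero_of_abs_lt_dvd hdvd hlt
  have hL_zero : L = 0 := Int.eq_zero_of_abs_lt_dvd ⟨-t, by linarith⟩ hL
  refine ⟨hL_zero, ?_⟩
  simpa [hL_zero, hM.ne'] using hzero

lemma eq_zero_of_dvd_of_dvd {n M U V a b c d : ℤ} (hM : Even M) (hMn : 3 * M ≤ n)
    (hU : |U| < M) (hV : |V| < M) (ha : |a| ≤ 1) (hb : |b| ≤ 1) (hc : |c| ≤ 1) (hd : |d| ≤ 1)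
    (hVd : V ≡ d [ZMOD 2]) (hfst : n ∣ 3 * V + (a + b + c)) (hsnd : n ∣ U + M * (b - c + d)) :
    U = 0 ∧ V = 0 ∧ a = 0 ∧ b = 0 ∧ c = 0 := by
  rw [abs_le] at ha hb hc hd
  rw [Int.ModEq] at hVd
  obtain ⟨hV_zero, habc⟩ | ⟨habc, hV_odd⟩ :=
    eq_zero_or_odd_of_dvd_three_mul_add hM hMn hV (abs_le.2 (by omega)) hfst
  · obtain ⟨hU_zero, hbcd⟩ :=
      eq_zero_and_eq_zero_of_dvd_add_mul hMn hU (abs_le.2 (by omega)) hsnd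
    omega
  · have hbc : b = c := by
      rw [abs_eq (by norm_num)] at habc
      omega
    obtain ⟨-, hbcd⟩ := eq_zero_and_eq_zero_of_dvd_add_mul hMn hU (abs_le.2 (by omega)) hsnd
    rw [Int.odd_iff] at hV_odd
    omega

/-- Integer lifts of `2k + 5` elements of `C_n ⊕ C_n` which form a dissociated family as soon as
`3 * 2 ^ (k + 1) ≤ n`. In a vanishing combination the first coordinates leave two cases: the
coefficients of the middle block sum to zero, or they are all `1` or all `-1` and the coefficient of
`(3, 2 ^ (k + 1))`, the first element of the last block, is odd. The second coordinate of that
element rules out the latter case. -/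
def pairFamily (k : ℕ) : Fin (k + 1) ⊕ Fin 3 ⊕ Fin (k + 1) → ℤ × ℤ :=
  Sum.elim (fun i ↦ (0, 2 ^ (i : ℕ)))
    (Sum.elim ![(1, 0), (1, 2 ^ (k + 1)), (1, -2 ^ (k + 1))]
      fun j ↦ (3 * 2 ^ (j : ℕ), if j = 0 then 2 ^ (k + 1) else 0))

variable {k : ℕ} (ε : Fin (k + 1) ⊕ Fin 3 ⊕ Fin (k + 1) → ℤ)

lemma sum_mul_pairFamily_fst :
    ∑ i, ε i * (pairFamily k i).1 = 3 * ∑ j, ε (.inr (.inr j)) * 2 ^ (j : ℕ) +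
      (ε (.inr (.inl 0)) + ε (.inr (.inl 1)) + ε (.inr (.inl 2))) := by
  simp [pairFamily, Fin.sum_univ_three, mul_sum, mul_left_comm, add_comm]

lemma sum_mul_pairFamily_snd :
    ∑ i, ε i * (pairFamily k i).2 = ∑ i, ε (.inl i) * 2 ^ (i : ℕ) +
      2 ^ (k + 1) * (ε (.inr (.inl 1)) - ε (.inr (.inl 2)) + ε (.inr (.inr 0))) := by
  simp [pairFamily, Fin.sum_univ_three]
  ring

lemma isDissociated_pairFamily {n : ℕ} (hn : 3 * 2 ^ (k + 1) ≤ n) :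
    IsDissociated fun i ↦ (((pairFamily k i).1 : ZMod n), ((pairFamily k i).2 : ZMod n)) := by
  intro ε hε hsum
  have hfst : (n : ℤ) ∣ ∑ i, ε i * (pairFamily k i).1 := by
    rw [← ZMod.intCast_zmod_eq_zero_iff_dvd]
    simpa [Prod.fst_sum] using congrArg Prod.fst hsum
  have hsnd : (n : ℤ) ∣ ∑ i, ε i * (pairFamily k i).2 := by
    rw [← ZMod.intCast_zmod_eq_zero_iff_dvd]
    simpa [Prod.snd_sum] using congrArg Prod.snd hsum
  rw [sum_mul_pairFamily_fst] at hfst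
  rw [sum_mul_pairFamily_snd] at hsnd
  have hn' : (3 * 2 ^ (k + 1) : ℤ) ≤ n := by exact_mod_cast hn
  have hpow_even : Even ((2 : ℤ) ^ (k + 1)) := even_two.pow_of_ne_zero k.succ_ne_zero
  have hparity : ∑ j, ε (.inr (.inr j)) * 2 ^ (j : ℕ) ≡ ε (.inr (.inr 0)) [ZMOD 2] := by
    rw [sum_mul_two_pow_succ]
    simp
  obtain ⟨hU, hV, ha, hb, hc⟩ := eq_zero_of_dvd_of_dvd hpow_even hn'
    (abs_sum_mul_two_pow_lt fun i ↦ hε (.inl i)) (abs_sum_mul_two_pow_lt fun j ↦ hε (.inr (.inr j)))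
    (hε _) (hε _) (hε _) (hε _) hparity hfst hsnd
  have hu := isDissociated_two_pow (fun i ↦ ε (.inl i)) (fun i ↦ hε _) hU
  have hv := isDissociated_two_pow (fun j ↦ ε (.inr (.inr j))) (fun j ↦ hε _) hV
  funext i
  rcases i with i | i | j
  · exact congrFun hu i
  · fin_cases i
    exacts [ha, hb, hc]
  · exact congrFun hv j

lemma lt_davpm_zmod_prod_zmod {n : ℕ} (hn : 3 * 2 ^ (k + 1) ≤ n) :
    2 * (k + 2) + 1 < Davpm (ZMod n × ZMod n) := by
  have hpow := Nat.two_pow_pos (k + 1)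
  have : NeZero n := ⟨by omega⟩
  have hcard := (isDissociated_pairFamily hn).card_lt_davpm
  simp only [Fintype.card_sum, Fintype.card_fin] at hcard
  omega

end PairFamily

section Logarithm

lemma fract_logb_natCast {b n : ℕ} : Int.fract (Real.logb b n) = Real.logb b n - Nat.log b n := by
  rw [Int.fract, Real.floor_logb_natCast n.cast_nonneg, Int.log_natCast, Int.cast_natCast]

lemma mul_pow_log_le_of_fract_logb_le {b m n : ℕ} (hb : 1 < b) (hm : m ≠ 0) (hn : n ≠ 0)
    (h : Int.fract (Real.logb b m) ≤ Int.fract (Real.logb b n)) :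
    m * b ^ Nat.log b n ≤ n * b ^ Nat.log b m := by
  have hb' : (1 : ℝ) < b := by exact_mod_cast hb
  have hlogb (x e : ℕ) (hx : x ≠ 0) : Real.logb b (x * b ^ e) = Real.logb b x + e := by
    rw [Real.logb_mul (by positivity) (by positivity), Real.logb_pow,
      Real.logb_self_eq_one hb', mul_one]
  have hle : Real.logb b (m * b ^ Nat.log b n) ≤ Real.logb b (n * b ^ Nat.log b m) := by
    rw [fract_logb_natCast, fract_logb_natCast] at h
    rw [hlogb m _ hm, hlogb n _ hn]
    linarith
  exact_mod_cast (Real.logb_le_logb hb' (by positivity) (by positivity)).1 hle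

lemma half_le_fract_logb_two_three : 1 / 2 ≤ Int.fract (Real.logb 2 3) := by
  have hlog : (3 : ℝ) / 2 ≤ Real.logb 2 3 := by
    have h : Real.logb 2 (2 ^ 3) ≤ Real.logb 2 (3 ^ 2) :=
      Real.logb_le_logb_of_le one_lt_two (by norm_num) (by norm_num)
    rw [Real.logb_pow, Real.logb_pow, Real.logb_self_eq_one one_lt_two] at h
    push_cast at h
    linarith
  have hfract : Int.fract (Real.logb 2 3) = Real.logb 2 3 - 1 := by
    simpa [show Nat.log 2 3 = 1 by norm_num] using fract_logb_natCast (b := 2) (n := 3)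
  linarith

lemma floor_natCast_mul_of_half_le_fract {r : ℕ} {x : ℝ} (hr : 0 < r) (hx : 1 / 2 ≤ Int.fract x)
    (hxr : Int.fract x < ((r / 2 : ℕ) + 1 : ℝ) / r) :
    ⌊r * x⌋ = r * ⌊x⌋ + (r / 2 : ℕ) := by
  have hr' : (0 : ℝ) < r := by exact_mod_cast hr
  have hhalf : ((r / 2 : ℕ) : ℝ) ≤ r / 2 := Nat.cast_div_le
  have hfract : ⌊r * Int.fract x⌋ = (r / 2 : ℕ) := by
    rw [Int.floor_eq_iff, Int.cast_natCast]
    rw [lt_div_iff₀ hr'] at hxr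
    constructor <;> nlinarith
  calc ⌊r * x⌋ = ⌊r * Int.fract x + (r * ⌊x⌋ : ℤ)⌋ := by
        rw [Int.fract]; push_cast; congr 1; ring
    _ = r * ⌊x⌋ + (r / 2 : ℕ) := by rw [Int.floor_add_intCast, hfract, add_comm]

end Logarithm

lemma davpm_pi_zmod_le (n r : ℕ) [NeZero n] :
    (Davpm (Fin r → ZMod n) : ℤ) ≤ ⌊r * Real.logb 2 n⌋ + 1 := by
  have hfloor : ⌊r * Real.logb 2 n⌋ = Nat.log 2 (n ^ r) := by
    rw [← Real.logb_pow, ← Int.log_natCast (R := ℝ), ← Real.floor_logb_natCast (Nat.cast_nonneg _)]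
    simp
  rw [hfloor]
  exact_mod_cast (davpm_le_log_card_add_one (G := Fin r → ZMod n)).trans_eq (by simp)

theorem stmt10 (n : ℕ) (hn : 4 ≤ n)
    (hfr : Int.fract (Real.logb 2 3) ≤ Int.fract (Real.logb 2 n))
    (r : ℕ) (hr : 0 < r)
    (hlt : Int.fract (Real.logb 2 n) < ((r / 2 : ℕ) + 1 : ℝ) / r) :
    (Davpm (Fin r → ZMod n) : ℤ) = ⌊(r : ℝ) * Real.logb 2 n⌋ + 1 := by
  have : NeZero n := ⟨by omega⟩
  have hlog_ge : 2 ≤ Nat.log 2 n := (Nat.le_log_iff_pow_le one_lt_two (by omega)).2 (by omega)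
  obtain ⟨k, hk⟩ := Nat.exists_eq_add_of_le' hlog_ge
  have hfloor : ⌊Real.logb 2 n⌋ = (k + 2 : ℕ) := by
    rw [← hk, ← Int.log_natCast (R := ℝ)]
    exact_mod_cast Real.floor_logb_natCast (b := 2) n.cast_nonneg
  have hpow : 3 * 2 ^ (k + 1) ≤ n := by
    have hle := mul_pow_log_le_of_fract_logb_le (b := 2) (m := 3) (n := n) one_lt_two (by omega)
      (by omega) (by exact_mod_cast hfr)
    rw [hk, show Nat.log 2 3 = 1 by norm_num, pow_one, pow_succ] at hle
    omega
  have hlower : r * (k + 2) + r / 2 < Davpm (Fin r → ZMod n) :=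
    mul_add_half_lt_davpm_pi (lt_davpm_zmod (by grind)) (lt_davpm_zmod_prod_zmod hpow) r
  refine (davpm_pi_zmod_le n r).antisymm ?_
  rw [floor_natCast_mul_of_half_le_fract hr (half_le_fract_logb_two_three.trans hfr) hlt, hfloor]
  exact_mod_cast hlower
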